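/- The Hantzsche–Wendt group Δ_P is not diffuse. -/

import Mathlib

open FreeGroup in
/-- Relators of the Hantzsche–Wendt group: `x⁻¹y²xy²` and `y⁻¹x²yx²`,
encoding the relations `x⁻¹y²x = y⁻²` and `y⁻¹x²y = x⁻²`. -/
def hwRels : Set (FreeGroup (Fin 2)) :=
  {(of 0)⁻¹ * of 1 ^ 2 * of 0 * of 1 ^ 2,
   (of 1)⁻¹ * of 0 ^ 2 * of 1 * of 0 ^ 2}

/-- The Hantzsche–Wendt group `Δ_P = ⟨x, y ∣ x⁻¹y²x = y⁻², y⁻¹x²y = x⁻²⟩`. -/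
abbrev HantzscheWendtGroup : Type := PresentedGroup hwRels

/-- The generator `x` of the Hantzsche–Wendt group. -/
def hwX : HantzscheWendtGroup := PresentedGroup.of 0

/-- The generator `y` of the Hantzsche–Wendt group. -/
def hwY : HantzscheWendtGroup := PresentedGroup.of 1

/-- A group `G` is diffuse if every finite nonempty subset `A` of `G` has an extremal point,
i.e. an element `a ∈ A` such that for every `g ≠ 1`, either `g*a ∉ A` or `g⁻¹*a ∉ A`. -/
def IsDiffuse (G : Type*) [Group G] : Prop :=
  ∀ A : Finset G, A.Nonempty →
    ∃ a ∈ A, ∀ g : G, g ≠ 1 → g * a ∉ A ∨ g⁻¹ * a ∉ A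

lemma hw_rel1 : hwX⁻¹ * hwY ^ 2 * hwX * hwY ^ 2 = 1 :=
  PresentedGroup.one_of_mem (rels := hwRels) (Or.inl rfl)

lemma hw_rel2 : hwY⁻¹ * hwX ^ 2 * hwY * hwX ^ 2 = 1 :=
  PresentedGroup.one_of_mem (rels := hwRels) (Or.inr rfl)

/-- From `v⁻¹u²vu² = 1` we get `u²v⁻¹u² = v⁻¹` and `u⁻²v⁻¹u⁻² = v⁻¹`. -/
lemma hw_aux {G : Type*} [Group G] {u v : G} (h : v⁻¹ * u ^ 2 * v * u ^ 2 = 1) :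
    u ^ 2 * v⁻¹ * u ^ 2 = v⁻¹ ∧ (u ^ 2)⁻¹ * v⁻¹ * (u ^ 2)⁻¹ = v⁻¹ := by
  generalize u ^ 2 = w at *
  have h1 : w * v * w = v := by
    calc w * v * w = v * (v⁻¹ * w * v * w) := by group
      _ = v := by rw [h, mul_one]
  have h2 : w⁻¹ * v⁻¹ * w⁻¹ = v⁻¹ := by
    calc w⁻¹ * v⁻¹ * w⁻¹ = (w * v * w)⁻¹ := by group
      _ = v⁻¹ := by rw [h1]
  refine ⟨?_, h2⟩
  calc w * v⁻¹ * w = w * (w⁻¹ * v⁻¹ * w⁻¹) * w := by rw [h2]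
    _ = v⁻¹ := by group

/-- The generator `u` is not in the kernel of the parity map that kills the other generator. -/
lemma hw_parity (i : Fin 2) : ∃ f : HantzscheWendtGroup →* Multiplicative (ZMod 2),
    ∀ j, f (PresentedGroup.of j) = Multiplicative.ofAdd (if j = i then 1 else 0) := by
  have key : ∀ r ∈ hwRels, FreeGroup.lift
      (fun j : Fin 2 => Multiplicative.ofAdd (if j = i then (1 : ZMod 2) else 0)) r = 1 := by
    rintro r (rfl | rfl) <;> simp only [map_mul, map_inv, map_pow, FreeGroup.lift_apply_of] <;>
      revert i <;> decide
  exact ⟨PresentedGroup.toGroup key, fun j => PresentedGroup.toGroup.of key⟩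

/-- The Hantzsche–Wendt group is not diffuse. -/
theorem hw_not_diffuse : ¬ IsDiffuse HantzscheWendtGroup := by
  classical
  intro H
  obtain ⟨y1, y2⟩ := hw_aux hw_rel1
  obtain ⟨x1, x2⟩ := hw_aux hw_rel2
  obtain ⟨f, hf⟩ := hw_parity 0
  obtain ⟨k, hk⟩ := hw_parity 1
  have fx : f hwX = Multiplicative.ofAdd 1 := hf 0
  have fy : f hwY = 1 := hf 1
  have kx : k hwX = 1 := hk 0
  have ky : k hwY = Multiplicative.ofAdd 1 := hk 1
  have hne : (Multiplicative.ofAdd (1 : ZMod 2)) ≠ 1 := by decide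
  obtain ⟨a, ha, h⟩ := H {1, hwX, hwX⁻¹, hwX ^ 2, (hwX ^ 2)⁻¹,
    hwY, hwY⁻¹, hwY ^ 2, (hwY ^ 2)⁻¹} ⟨1, by simp⟩
  have nx : hwX ≠ 1 := fun e => hne (by rw [← fx, e, map_one])
  have ny : hwY ≠ 1 := fun e => hne (by rw [← ky, e, map_one])
  have nyx : hwY * (hwX ^ 2)⁻¹ ≠ 1 := fun e => hne (by
    have := congrArg k e
    simp [kx, ky] at this)
  have nyx' : hwY * hwX ^ 2 ≠ 1 := fun e => hne (by
    have := congrArg k e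
    simp [kx, ky] at this)
  have nxy : hwX * (hwY ^ 2)⁻¹ ≠ 1 := fun e => hne (by
    have := congrArg f e
    simp [fx, fy] at this)
  have nxy' : hwX * hwY ^ 2 ≠ 1 := fun e => hne (by
    have := congrArg f e
    simp [fx, fy] at this)
  have sq : ∀ u : HantzscheWendtGroup, u⁻¹ * u⁻¹ = (u ^ 2)⁻¹ := fun u => by group
  have sq' : ∀ u : HantzscheWendtGroup, u * u = u ^ 2 := fun u => (pow_two u).symm
  simp only [Finset.mem_insert, Finset.mem_singleton] at ha
  rcases ha with rfl | rfl | rfl | rfl | rfl | rfl | rfl | rfl | rfl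
  · rcases h _ nx with h | h <;> simp at h
  · rcases h _ nx with h | h <;> simp [sq'] at h
  · rcases h _ nx with h | h <;> simp [sq] at h
  · rcases h _ nyx with h | h
    · simp at h
    · rw [mul_inv_rev, inv_inv, x1] at h; simp at h
  · rcases h _ nyx' with h | h
    · simp at h
    · rw [mul_inv_rev, x2] at h; simp at h
  · rcases h _ ny with h | h <;> simp [sq'] at h
  · rcases h _ ny with h | h <;> simp [sq] at h
  · rcases h _ nxy with h | h
    · simp at h
    · rw [mul_inv_rev, inv_inv, y1] at h; simp at h
  · rcases h _ nxy' with h | h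
    · simp at h
    · rw [mul_inv_rev, y2] at h; simp at h
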